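/- arXiv:1612.07262 — 2 statements merged into one kernel-verified Lean document; each statement's English description precedes it below -/
import Mathlib

section
/- The map α ↦ C_α is continuous on [0,4); that is, for every ᾱ ∈ [0,4) and every sequence (α_j) with 0 ≤ α_j < 4 and α_j → ᾱ, one has C_{α_j} → C_{ᾱ}. -/
/-!
The crease energy is uniformly continuous in `α`, and the reason is that a competitor of bounded
energy can be truncated to a window of bounded length.

The energy of a pair of neighbours equals
`2 (cos ((a+b)/2) - α/4 cos ((a-b)/2))² + α²/8 sin² ((a-b)/2)`, so it is nonnegative and, for angles
in `[-π/2, π/2]`, vanishes only at `a = b = ±θ_α`. By compactness a site whose angle is `δ`-far from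
both wells `±θ_α` costs at least some `ε(δ) > 0`, uniformly in `α ∈ [0,4]`
(`exists_pos_le_pairEnergy`). Given a competitor `θ` for `α` with energy at most `9`, let `p` be a
last site near the well `-θ_α` and `q` the first later site near `θ_α`. All sites strictly between
are far from both wells, hence `(q - p - 1) ε ≤ 9` (`exists_window`). Keeping `θ` on `[p, q]` and
replacing it by `∓θ_β` outside gives a competitor for `β`: on the window the energy
changes by `O(|α - β|)` per site, with a bounded number of sites, the two interfaces cost
`O(δ + |θ_α - θ_β|)`, and the tails cost nothing (`creaseSum_truncate_le`).
Hence `C_β ≤ C_α + η` whenever `α`, `β` are close (`crease_le_add`), and the roles of `α` and `β`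
are symmetric.
-/

open Real MeasureTheory Filter Topology
open scoped ENNReal

noncomputable section

/-- The minimal angle `θ_α = arccos (α/4)`. -/
def thetaMin (α : ℝ) : ℝ := Real.arccos (α / 4)

/-- A single summand of the crease (transition) energy. -/
def creaseSummand (α : ℝ) (θ : ℤ → ℝ) (i : ℤ) : ℝ :=
  Real.cos (θ i + θ (i + 1)) - α / 2 * (Real.cos (θ i) + Real.cos (θ (i + 1)))
    + α ^ 2 / 8 + 1

/-- The (nonnegative-termed) sum over `ℤ`, with values in `[0, ∞]`. -/
def creaseSum (α : ℝ) (θ : ℤ → ℝ) : ℝ≥0∞ :=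
  ∑' i : ℤ, ENNReal.ofReal (creaseSummand α θ i)

/-- The crease energy `C_α`: infimum over `N ∈ ℕ` and maps `θ : ℤ → [−π/2, π/2]` with
`θ^i = sign i · θ_α` for `|i| ≥ N` of the sum of the transition energy. -/
def crease (α : ℝ) : ℝ≥0∞ :=
  sInf { c : ℝ≥0∞ | ∃ (N : ℕ) (θ : ℤ → ℝ),
    (∀ i, θ i ∈ Set.Icc (-(π / 2)) (π / 2)) ∧
    (∀ i : ℤ, (N : ℤ) ≤ |i| → θ i = (i.sign : ℝ) * thetaMin α) ∧
    c = creaseSum α θ }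

/-! ### The pair energy and its wells -/

/-- The energy of two neighbouring angles `a`, `b`; this is the summand of the crease energy. -/
def pairEnergy (α a b : ℝ) : ℝ :=
  Real.cos (a + b) - α / 2 * (Real.cos a + Real.cos b) + α ^ 2 / 8 + 1

lemma pairEnergy_eq (α a b : ℝ) :
    pairEnergy α a b = 2 * (Real.cos ((a + b) / 2) - α / 4 * Real.cos ((a - b) / 2)) ^ 2
      + α ^ 2 / 8 * Real.sin ((a - b) / 2) ^ 2 := by
  have h1 : Real.cos (a + b) = 2 * Real.cos ((a + b) / 2) ^ 2 - 1 := by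
    rw [← Real.cos_two_mul]; congr 1; ring
  have h2 : Real.cos a + Real.cos b = 2 * Real.cos ((a + b) / 2) * Real.cos ((a - b) / 2) :=
    Real.cos_add_cos a b
  have h3 := Real.sin_sq_add_cos_sq ((a - b) / 2)
  rw [pairEnergy, h1, h2]
  linear_combination (-α ^ 2 / 8) * h3

lemma pairEnergy_nonneg (α a b : ℝ) : 0 ≤ pairEnergy α a b := by
  rw [pairEnergy_eq]; positivity

lemma cos_thetaMin {α : ℝ} (hα : α ∈ Set.Icc (0 : ℝ) 4) : Real.cos (thetaMin α) = α / 4 :=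
  Real.cos_arccos (by linarith [hα.1]) (by linarith [hα.2])

lemma thetaMin_mem {α : ℝ} (hα : α ∈ Set.Icc (0 : ℝ) 4) : thetaMin α ∈ Set.Icc 0 (π / 2) :=
  ⟨Real.arccos_nonneg _, Real.arccos_le_pi_div_two.2 (by linarith [hα.1])⟩

lemma continuous_thetaMin : Continuous thetaMin := by
  unfold thetaMin
  exact Real.continuous_arccos.comp (by fun_prop)

lemma pairEnergy_well {α : ℝ} (hα : α ∈ Set.Icc (0 : ℝ) 4) :
    pairEnergy α (thetaMin α) (thetaMin α) = 0 := by
  rw [pairEnergy_eq]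
  simp [cos_thetaMin hα]

lemma pairEnergy_neg (α a b : ℝ) : pairEnergy α (-a) (-b) = pairEnergy α a b := by
  simp only [pairEnergy, Real.cos_neg, ← neg_add]

lemma pairEnergy_comm (α a b : ℝ) : pairEnergy α a b = pairEnergy α b a := by
  simp only [pairEnergy, add_comm]

lemma eq_of_pairEnergy_eq_zero {α a b : ℝ} (hα : α ∈ Set.Icc (0 : ℝ) 4)
    (ha : a ∈ Set.Icc (-(π / 2)) (π / 2)) (hb : b ∈ Set.Icc (-(π / 2)) (π / 2))
    (h : pairEnergy α a b = 0) : a = thetaMin α ∨ a = -thetaMin α := by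
  obtain ⟨ha1, ha2⟩ := ha
  obtain ⟨hb1, hb2⟩ := hb
  have hpi := Real.pi_pos
  rw [pairEnergy_eq] at h
  have h1 : (Real.cos ((a + b) / 2) - α / 4 * Real.cos ((a - b) / 2)) ^ 2 = 0 := by
    nlinarith [sq_nonneg (Real.cos ((a + b) / 2) - α / 4 * Real.cos ((a - b) / 2)),
      sq_nonneg (α * Real.sin ((a - b) / 2))]
  have h2 : (α * Real.sin ((a - b) / 2)) ^ 2 = 0 := by
    nlinarith [sq_nonneg (Real.cos ((a + b) / 2) - α / 4 * Real.cos ((a - b) / 2)),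
      sq_nonneg (α * Real.sin ((a - b) / 2))]
  have h1' := pow_eq_zero_iff (two_ne_zero) |>.1 h1
  have h2' := pow_eq_zero_iff (two_ne_zero) |>.1 h2
  rcases mul_eq_zero.1 h2' with h0 | h0
  · -- For `α = 0` the second square is void, but `cos ((a+b)/2) = 0` forces `|a + b| = π`.
    subst h0
    have hw : thetaMin 0 = π / 2 := by simp [thetaMin]
    rw [hw]
    have hc : Real.cos ((a + b) / 2) = 0 := by simpa using h1'
    by_contra hne
    push Not at hne
    have hlt : a < π / 2 := lt_of_le_of_ne ha2 hne.1
    have hgt : -(π / 2) < a := lt_of_le_of_ne ha1 (Ne.symm hne.2)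
    have := Real.cos_pos_of_mem_Ioo (x := (a + b) / 2) ⟨by linarith, by linarith⟩
    linarith
  · have hd : (a - b) / 2 = 0 :=
      (Real.sin_eq_zero_iff_of_lt_of_lt (by linarith) (by linarith)).1 h0
    have hab : b = a := by linarith
    subst hab
    have hc : Real.cos b = α / 4 := by
      have : (b + b) / 2 = b := by ring
      rw [this] at h1'
      simp at h1'
      linarith
    unfold thetaMin
    rw [← hc]
    rcases le_total 0 b with hb0 | hb0
    · left; rw [Real.arccos_cos hb0 (by linarith)]
    · right
      rw [← Real.cos_neg, Real.arccos_cos (by linarith) (by linarith)]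
      ring

/-! ### Coercivity and continuity estimates -/

/-- Coercivity: a site that is `δ`-far from both wells costs a definite amount of energy,
uniformly in `α ∈ [0,4]`. -/
lemma exists_pos_le_pairEnergy {δ : ℝ} (hδ : 0 < δ) :
    ∃ ε > 0, ∀ α ∈ Set.Icc (0 : ℝ) 4, ∀ a ∈ Set.Icc (-(π / 2)) (π / 2),
      ∀ b ∈ Set.Icc (-(π / 2)) (π / 2), δ ≤ |a - thetaMin α| → δ ≤ |a + thetaMin α| →
      ε ≤ pairEnergy α a b := by
  have hct := continuous_thetaMin
  let S : Set (ℝ × ℝ × ℝ) :=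
    (Set.Icc (0 : ℝ) 4 ×ˢ Set.Icc (-(π / 2)) (π / 2) ×ˢ Set.Icc (-(π / 2)) (π / 2)) ∩
      {x | δ ≤ |x.2.1 - thetaMin x.1| ∧ δ ≤ |x.2.1 + thetaMin x.1|}
  have hS : IsCompact S := by
    refine (isCompact_Icc.prod (isCompact_Icc.prod isCompact_Icc)).inter_right ?_
    have h1 : Continuous fun x : ℝ × ℝ × ℝ => |x.2.1 - thetaMin x.1| := by fun_prop
    have h2 : Continuous fun x : ℝ × ℝ × ℝ => |x.2.1 + thetaMin x.1| := by fun_prop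
    exact (isClosed_le continuous_const h1).inter (isClosed_le continuous_const h2)
  have hcont : Continuous fun x : ℝ × ℝ × ℝ => pairEnergy x.1 x.2.1 x.2.2 := by
    unfold pairEnergy; fun_prop
  rcases S.eq_empty_or_nonempty with hE | hne
  · refine ⟨1, one_pos, fun α hα a ha b hb h1 h2 => ?_⟩
    have : (α, a, b) ∈ S := ⟨⟨hα, ha, hb⟩, h1, h2⟩
    simp [hE] at this
  · obtain ⟨x, hx, hmin⟩ := hS.exists_isMinOn hne hcont.continuousOn
    refine ⟨pairEnergy x.1 x.2.1 x.2.2, ?_, fun α hα a ha b hb h1 h2 => ?_⟩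
    · refine lt_of_le_of_ne (pairEnergy_nonneg _ _ _) fun h0 => ?_
      obtain ⟨⟨hx1, hx2, hx3⟩, hx4, hx5⟩ := hx
      rcases eq_of_pairEnergy_eq_zero hx1 hx2 hx3 h0.symm with h | h
      · rw [h] at hx4; simp at hx4; linarith
      · rw [h] at hx5; simp at hx5; linarith
    · have hmem : (α, a, b) ∈ S := ⟨⟨hα, ha, hb⟩, h1, h2⟩
      have h3 := isMinOn_iff.1 hmin (α, a, b) hmem
      dsimp only at h3
      exact h3

lemma pairEnergy_le_of_well {β b : ℝ} (hβ : β ∈ Set.Icc (0 : ℝ) 4) :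
    pairEnergy β b (thetaMin β) ≤ 3 * |b - thetaMin β| := by
  have h0 := pairEnergy_well hβ
  have h1 := (abs_le.1 (Real.abs_cos_sub_cos_le (b + thetaMin β) (thetaMin β + thetaMin β))).2
  have h2 := (abs_le.1 (Real.abs_cos_sub_cos_le b (thetaMin β))).1
  rw [add_sub_add_right_eq_sub] at h1
  have h3 : β / 2 * (Real.cos (thetaMin β) - Real.cos b) ≤ 2 * |b - thetaMin β| := by
    have hA := abs_nonneg (b - thetaMin β)
    nlinarith [hβ.1, hβ.2]
  unfold pairEnergy at *
  linarith

lemma pairEnergy_le_of_param {α β a b : ℝ} (hα : α ∈ Set.Icc (0 : ℝ) 4)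
    (hβ : β ∈ Set.Icc (0 : ℝ) 4)
    (ha : a ∈ Set.Icc (-(π / 2)) (π / 2)) (hb : b ∈ Set.Icc (-(π / 2)) (π / 2)) :
    pairEnergy β a b ≤ pairEnergy α a b + 2 * |α - β| := by
  have ha0 := Real.cos_nonneg_of_mem_Icc ha
  have hb0 := Real.cos_nonneg_of_mem_Icc hb
  have ha1 := Real.cos_le_one a
  have hb1 := Real.cos_le_one b
  obtain ⟨hα0, hα4⟩ := hα
  obtain ⟨hβ0, hβ4⟩ := hβ
  -- The difference is `(α - β) t` with `|t| ≤ 1`.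
  have key : |(α - β) * ((Real.cos a + Real.cos b) / 2 - (α + β) / 8)| ≤ |α - β| * 2 := by
    rw [abs_mul]
    gcongr
    rw [abs_le]; constructor <;> linarith
  have := (abs_le.1 key).2
  unfold pairEnergy
  nlinarith

/-! ### A uniform upper bound and the transition window -/

/-- The test configuration `i ↦ sign i · θ_α` has energy at most `8`, as only the sites `-1` and
`0` contribute. -/
lemma crease_le_eight {α : ℝ} (hα : α ∈ Set.Icc (0 : ℝ) 4) : crease α ≤ ENNReal.ofReal 8 := by
  have hw := thetaMin_mem hα
  have hpi := Real.pi_pos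
  have hmem : ∀ i : ℤ, (i.sign : ℝ) * thetaMin α ∈ Set.Icc (-(π / 2)) (π / 2) := by
    intro i
    rcases Int.sign_trichotomy i with h | h | h <;> rw [h] <;> push_cast <;>
      constructor <;> linarith [hw.1, hw.2]
  have hle : crease α ≤ creaseSum α fun i => (i.sign : ℝ) * thetaMin α :=
    sInf_le ⟨0, _, hmem, fun _ _ => rfl, rfl⟩
  refine hle.trans ?_
  have hsupp : ∀ i ∉ ({-1, 0} : Finset ℤ),
      ENNReal.ofReal (creaseSummand α (fun i => (i.sign : ℝ) * thetaMin α) i) = 0 := by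
    intro i hi
    simp only [Finset.mem_insert, Finset.mem_singleton, not_or] at hi
    change ENNReal.ofReal
      (pairEnergy α ((i.sign : ℝ) * thetaMin α) (((i + 1).sign : ℝ) * thetaMin α)) = 0
    rcases lt_or_ge 0 i with h | h
    · rw [Int.sign_eq_one_of_pos h, Int.sign_eq_one_of_pos (by omega)]
      simp [pairEnergy_well hα]
    · rw [Int.sign_eq_neg_one_of_neg (by omega), Int.sign_eq_neg_one_of_neg (by omega)]
      simp [pairEnergy_neg, pairEnergy_well hα]
  have hterm : ∀ i : ℤ,
      ENNReal.ofReal (creaseSummand α (fun i => (i.sign : ℝ) * thetaMin α) i)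
        ≤ ENNReal.ofReal 4 := by
    intro i
    apply ENNReal.ofReal_le_ofReal
    have h1 := Real.cos_nonneg_of_mem_Icc (hmem i)
    have h2 := Real.cos_nonneg_of_mem_Icc (hmem (i + 1))
    have h3 := Real.cos_le_one ((i.sign : ℝ) * thetaMin α + ((i + 1).sign : ℝ) * thetaMin α)
    unfold creaseSummand
    nlinarith [hα.1, hα.2, mul_nonneg hα.1 h1, mul_nonneg hα.1 h2]
  unfold creaseSum
  rw [tsum_eq_sum hsupp]
  refine (Finset.sum_le_sum fun i _ => hterm i).trans ?_
  rw [Finset.sum_const, show (({-1, 0} : Finset ℤ).card) = 2 from rfl, two_nsmul,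
    ← ENNReal.ofReal_add (by norm_num) (by norm_num)]
  norm_num

/-- A competitor of energy at most `9` passes from near `-θ_α` to near `θ_α` within a
window whose length is controlled by the coercivity constant `ε`. -/
lemma exists_window {α δ ε : ℝ} {θ : ℤ → ℝ} {N : ℕ} (hα : α ∈ Set.Icc (0 : ℝ) 4)
    (hδ : 0 < δ) (hε : 0 < ε)
    (hcoer : ∀ α ∈ Set.Icc (0 : ℝ) 4, ∀ a ∈ Set.Icc (-(π / 2)) (π / 2),
      ∀ b ∈ Set.Icc (-(π / 2)) (π / 2), δ ≤ |a - thetaMin α| → δ ≤ |a + thetaMin α| →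
      ε ≤ pairEnergy α a b)
    (hθ : ∀ i, θ i ∈ Set.Icc (-(π / 2)) (π / 2))
    (hN : ∀ i : ℤ, (N : ℤ) ≤ |i| → θ i = (i.sign : ℝ) * thetaMin α)
    (hE : creaseSum α θ ≤ ENNReal.ofReal 9) :
    ∃ p q : ℤ, p < q ∧ |θ p + thetaMin α| < δ ∧ |θ q - thetaMin α| < δ ∧
      (((q - p).toNat : ℕ) : ℝ) ≤ 9 / ε + 1 := by
  have hleft : |θ (-N - 1) + thetaMin α| < δ := by
    rw [hN (-N - 1) (by rw [abs_of_nonpos] <;> omega), Int.sign_eq_neg_one_of_neg (by omega)]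
    simpa using hδ
  have hright : ∀ i : ℤ, N + 1 ≤ i → |θ i - thetaMin α| < δ := by
    intro i hi
    rw [hN i (by rw [abs_of_nonneg] <;> omega), Int.sign_eq_one_of_pos (by omega)]
    simpa using hδ
  -- The bound `i ≤ N + 1` keeps the set bounded even when the two wells are `δ`-close.
  obtain ⟨p, ⟨hpN, hp⟩, hpmax⟩ := Int.exists_greatest_of_bdd
    (P := fun i => i ≤ (N : ℤ) + 1 ∧ |θ i + thetaMin α| < δ)
    ⟨N + 1, fun i hi => hi.1⟩ ⟨-N - 1, by omega, hleft⟩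
  obtain ⟨q, ⟨hpq, hq⟩, hqmin⟩ := Int.exists_least_of_bdd
    (P := fun i => p < i ∧ |θ i - thetaMin α| < δ)
    ⟨p, fun i hi => hi.1.le⟩ ⟨N + 2, by omega, hright _ (by omega)⟩
  have hqN : q ≤ N + 2 := hqmin _ ⟨by omega, hright _ (by omega)⟩
  refine ⟨p, q, hpq, hp, hq, ?_⟩
  have hmid : ∀ i ∈ Finset.Ioo p q, ENNReal.ofReal ε ≤ ENNReal.ofReal (creaseSummand α θ i) := by
    intro i hi
    rw [Finset.mem_Ioo] at hi
    refine ENNReal.ofReal_le_ofReal (hcoer α hα _ (hθ i) _ (hθ (i + 1)) ?_ ?_)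
    · by_contra! h
      have := hqmin i ⟨hi.1, h⟩
      omega
    · by_contra! h
      have := hpmax i ⟨by omega, h⟩
      omega
  have hsum : ((Finset.Ioo p q).card : ℝ≥0∞) * ENNReal.ofReal ε ≤ ENNReal.ofReal 9 := by
    rw [← nsmul_eq_mul, ← Finset.sum_const]
    exact ((Finset.sum_le_sum hmid).trans (ENNReal.sum_le_tsum _)).trans hE
  rw [← ENNReal.ofReal_natCast, ← ENNReal.ofReal_mul (by positivity),
    ENNReal.ofReal_le_ofReal_iff (by norm_num), ← le_div_iff₀ hε, Int.card_Ioo] at hsum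
  have : (q - p).toNat = (q - p - 1).toNat + 1 := by omega
  rw [this]
  push_cast
  linarith

/-! ### Truncation to the window -/

/-- The configuration equal to `θ` on `[p, q]`, to the well `-θ_β` on its left and to the well
`θ_β` on its right. -/
def truncate (β : ℝ) (p q : ℤ) (θ : ℤ → ℝ) (i : ℤ) : ℝ :=
  if i < p then -thetaMin β else if i ≤ q then θ i else thetaMin β

/-- Truncating costs `2 |α - β|` at each site of the window and `3 B` at each of the two interfaces
`(p - 1, p)` and `(q, q + 1)`. -/
lemma creaseSum_truncate_le {α β B : ℝ} {θ : ℤ → ℝ} {p q : ℤ} (hα : α ∈ Set.Icc (0 : ℝ) 4)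
    (hβ : β ∈ Set.Icc (0 : ℝ) 4) (hθ : ∀ i, θ i ∈ Set.Icc (-(π / 2)) (π / 2)) (hpq : p < q)
    (hp : |θ p + thetaMin β| ≤ B) (hq : |θ q - thetaMin β| ≤ B) :
    creaseSum β (truncate β p q θ) ≤ creaseSum α θ
      + ENNReal.ofReal (((q - p).toNat : ℝ) * (2 * |α - β|) + 6 * B) := by
  have hB : 0 ≤ B := (abs_nonneg _).trans hp
  have hpt : ∀ i : ℤ, ENNReal.ofReal (creaseSummand β (truncate β p q θ) i) ≤
      ENNReal.ofReal (creaseSummand α θ i)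
      + ((if i ∈ Finset.Ico p q then ENNReal.ofReal (2 * |α - β|) else 0)
      + ((if i = p - 1 then ENNReal.ofReal (3 * B) else 0)
      + (if i = q then ENNReal.ofReal (3 * B) else 0))) := by
    intro i
    change ENNReal.ofReal (pairEnergy β (truncate β p q θ i) (truncate β p q θ (i + 1))) ≤ _
    rcases lt_trichotomy i (p - 1) with h | h | h
    · have h1 : truncate β p q θ i = -thetaMin β := if_pos (by omega)
      have h2 : truncate β p q θ (i + 1) = -thetaMin β := if_pos (by omega)
      rw [h1, h2, pairEnergy_neg, pairEnergy_well hβ]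
      simp
    · have h1 : truncate β p q θ i = -thetaMin β := if_pos (by omega)
      have h2 : truncate β p q θ (i + 1) = θ p := by
        subst h
        simp [truncate, hpq.le]
      rw [h1, h2, if_pos h]
      have h3 : pairEnergy β (-thetaMin β) (θ p) ≤ 3 * B := by
        rw [pairEnergy_comm, ← pairEnergy_neg, neg_neg]
        refine (pairEnergy_le_of_well hβ).trans ?_
        rw [← abs_neg, show -(-θ p - thetaMin β) = θ p + thetaMin β by ring]
        linarith
      exact (ENNReal.ofReal_le_ofReal h3).trans
        (le_add_left (le_add_left le_self_add))
    · rcases lt_trichotomy i q with h' | h' | h'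
      · have h1 : truncate β p q θ i = θ i := by
          rw [truncate, if_neg (by omega), if_pos (by omega)]
        have h2 : truncate β p q θ (i + 1) = θ (i + 1) := by
          rw [truncate, if_neg (by omega), if_pos (by omega)]
        rw [h1, h2, if_pos (Finset.mem_Ico.2 ⟨by omega, h'⟩), ← add_assoc]
        refine le_trans ?_ le_self_add
        change _ ≤ ENNReal.ofReal (pairEnergy α (θ i) (θ (i + 1))) + _
        rw [← ENNReal.ofReal_add (pairEnergy_nonneg _ _ _) (by positivity)]
        exact ENNReal.ofReal_le_ofReal
          (pairEnergy_le_of_param hα hβ (hθ i) (hθ (i + 1)))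
      · have h1 : truncate β p q θ i = θ q := by
          rw [truncate, if_neg (by omega), if_pos (by omega), h']
        have h2 : truncate β p q θ (i + 1) = thetaMin β := by
          rw [truncate, if_neg (by omega), if_neg (by omega)]
        rw [h1, h2, if_pos h']
        have h3 : pairEnergy β (θ q) (thetaMin β) ≤ 3 * B :=
          (pairEnergy_le_of_well hβ).trans (by linarith)
        exact (ENNReal.ofReal_le_ofReal h3).trans
          (le_add_left (le_add_left le_add_self))
      · have h1 : truncate β p q θ i = thetaMin β := by
          rw [truncate, if_neg (by omega), if_neg (by omega)]
        have h2 : truncate β p q θ (i + 1) = thetaMin β := by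
          rw [truncate, if_neg (by omega), if_neg (by omega)]
        rw [h1, h2, pairEnergy_well hβ]
        simp
  refine (ENNReal.tsum_le_tsum hpt).trans (le_of_eq ?_)
  have hsum : ∑' i : ℤ, (if i ∈ Finset.Ico p q then ENNReal.ofReal (2 * |α - β|) else 0)
      = ENNReal.ofReal (((q - p).toNat : ℝ) * (2 * |α - β|)) := by
    rw [tsum_eq_sum (s := Finset.Ico p q) fun i hi => if_neg hi,
      Finset.sum_congr rfl fun i hi => if_pos hi, Finset.sum_const, Int.card_Ico, nsmul_eq_mul,
      ENNReal.ofReal_mul (Nat.cast_nonneg _), ENNReal.ofReal_natCast]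
  rw [ENNReal.tsum_add, ENNReal.tsum_add, ENNReal.tsum_add, hsum, tsum_ite_eq, tsum_ite_eq,
    ← ENNReal.ofReal_add (by positivity) (by positivity),
    ← ENNReal.ofReal_add (by positivity) (by positivity), creaseSum]
  congr 3
  ring

/-- The one-sided estimate, uniform over `[0,4]`; its hypotheses are symmetric in `α` and `β`. -/
lemma crease_le_add {η : ℝ} (hη : 0 < η) (hη1 : η ≤ 1) :
    ∃ ρ > 0, ∀ α ∈ Set.Icc (0 : ℝ) 4, ∀ β ∈ Set.Icc (0 : ℝ) 4, |α - β| ≤ ρ →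
      |thetaMin α - thetaMin β| ≤ ρ → crease β ≤ crease α + ENNReal.ofReal (2 * η) := by
  -- `δ = η/24` plus the shift `ρ ≤ η/24` of the wells gives an interface error `6 · η/12 = η/2`.
  obtain ⟨ε, hε, hcoer⟩ := exists_pos_le_pairEnergy (δ := η / 24) (by positivity)
  have hL : 0 < 9 / ε + 1 := by positivity
  refine ⟨min (η / 24) (η / (4 * (9 / ε + 1))), by positivity, ?_⟩
  intro α hα β hβ hαβ hw
  have hfin : crease α ≠ ⊤ := ((crease_le_eight hα).trans_lt ENNReal.ofReal_lt_top).ne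
  have hlt : crease α < crease α + ENNReal.ofReal η :=
    ENNReal.lt_add_right hfin (by simpa using hη)
  obtain ⟨c, ⟨N, θ, hθ, hN, rfl⟩, hc⟩ := sInf_lt_iff.1 hlt
  have hE : creaseSum α θ ≤ ENNReal.ofReal 9 := by
    refine hc.le.trans ((add_le_add (crease_le_eight hα) (ENNReal.ofReal_le_ofReal hη1)).trans ?_)
    rw [← ENNReal.ofReal_add (by norm_num) (by norm_num)]
    norm_num
  obtain ⟨p, q, hpq, hp, hq, hlen⟩ := exists_window hα (by positivity) hε hcoer hθ hN hE
  have hw' := abs_le.1 (hw.trans (min_le_left _ _))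
  have hp' := abs_lt.1 hp
  have hq' := abs_lt.1 hq
  have hp2 : |θ p + thetaMin β| ≤ η / 12 := abs_le.2 ⟨by linarith, by linarith⟩
  have hq2 : |θ q - thetaMin β| ≤ η / 12 := abs_le.2 ⟨by linarith, by linarith⟩
  have hmain := creaseSum_truncate_le hα hβ hθ hpq hp2 hq2
  have hβw := thetaMin_mem hβ
  have hcomp : crease β ≤ creaseSum β (truncate β p q θ) := by
    refine sInf_le ⟨p.natAbs + q.natAbs + 1, _, fun i => ?_, fun i hi => ?_, rfl⟩
    · unfold truncate
      split_ifs
      · constructor <;> linarith [hβw.1, hβw.2]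
      · exact hθ i
      · constructor <;> linarith [hβw.1, hβw.2]
    · rcases abs_cases i with ⟨h, h'⟩ | ⟨h, h'⟩
      · rw [Int.sign_eq_one_of_pos (by omega), truncate, if_neg (by omega), if_neg (by omega)]
        simp
      · rw [Int.sign_eq_neg_one_of_neg (by omega), truncate, if_pos (by omega)]
        simp
  have herr : ((q - p).toNat : ℝ) * (2 * |α - β|) + 6 * (η / 12) ≤ η := by
    have h1 : |α - β| * (4 * (9 / ε + 1)) ≤ η :=
      (le_div_iff₀ (by positivity)).1 (hαβ.trans (min_le_right _ _))
    have h2 := mul_le_mul_of_nonneg_right hlen (abs_nonneg (α - β))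
    nlinarith
  calc crease β ≤ creaseSum β (truncate β p q θ) := hcomp
    _ ≤ creaseSum α θ + ENNReal.ofReal η := hmain.trans (by gcongr)
    _ ≤ crease α + ENNReal.ofReal η + ENNReal.ofReal η := by gcongr
    _ = crease α + ENNReal.ofReal (2 * η) := by
      rw [add_assoc, ← ENNReal.ofReal_add hη.le hη.le, two_mul]

/-! ### Continuity of the crease energy -/

/-- the crease energy is continuous on `[0,4)`: for `ᾱ ∈ [0,4)` and any
sequence `α_j ∈ [0,4)` with `α_j → ᾱ`, one has `C_{α_j} → C_ᾱ`. -/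
theorem crease_energy_continuous (abar : ℝ) (habar : abar ∈ Set.Ico (0 : ℝ) 4)
    (a : ℕ → ℝ) (ha : ∀ j, a j ∈ Set.Ico (0 : ℝ) 4)
    (hconv : Filter.Tendsto a Filter.atTop (𝓝 abar)) :
    Filter.Tendsto (fun j => crease (a j)) Filter.atTop (𝓝 (crease abar)) := by
  have habar' : abar ∈ Set.Icc (0 : ℝ) 4 := Set.Ico_subset_Icc_self habar
  have hfin : crease abar ≠ ⊤ := ((crease_le_eight habar').trans_lt ENNReal.ofReal_lt_top).ne
  rw [ENNReal.tendsto_nhds hfin]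
  intro e he
  obtain ⟨r, hr0, hre⟩ := ENNReal.lt_iff_exists_nnreal_btwn.1 he
  have hr : (0 : ℝ) < r := by exact_mod_cast hr0
  -- `e` may be infinite, so an error below both `e` and `2` is used.
  obtain ⟨ρ, hρ, H⟩ := crease_le_add (η := min 1 ((r : ℝ) / 2)) (by positivity) (min_le_left _ _)
  have hη : ENNReal.ofReal (2 * min 1 ((r : ℝ) / 2)) ≤ e := by
    refine le_trans (ENNReal.ofReal_le_ofReal (q := (r : ℝ)) ?_) ?_
    · linarith [min_le_right 1 ((r : ℝ) / 2)]
    · rw [ENNReal.ofReal_coe_nnreal]; exact hre.le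
  have h1 := Metric.tendsto_atTop.1 hconv ρ hρ
  have h2 := Metric.tendsto_atTop.1 ((continuous_thetaMin.tendsto abar).comp hconv) ρ hρ
  obtain ⟨n1, h1⟩ := h1
  obtain ⟨n2, h2⟩ := h2
  filter_upwards [eventually_ge_atTop n1, eventually_ge_atTop n2] with j hj1 hj2
  have haj : a j ∈ Set.Icc (0 : ℝ) 4 := Set.Ico_subset_Icc_self (ha j)
  have d1 : |a j - abar| ≤ ρ := (h1 j hj1).le
  have d2 : |thetaMin (a j) - thetaMin abar| ≤ ρ := (h2 j hj2).le
  have u1 := H (a j) haj abar habar' d1 d2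
  have u2 := H abar habar' (a j) haj (by rwa [abs_sub_comm]) (by rwa [abs_sub_comm])
  exact ⟨tsub_le_iff_right.2 (u1.trans (by gcongr)), u2.trans (by gcongr)⟩
end
end

section
/- Let α ∈ [0,4) and θ_α = arccos(α/4). For each n let θ_n : {0,…,n} → [−π/2, π/2] be a configuration with θ_n^n = θ_n^0, identified with its piecewise-constant interpolation on [0,1), and assume sup_n E_n^α(θ_n} < +∞. Then there exist a finite set S ⊂ (0,1), a subsequence (θ_{n_k}), and a piecewise constant function θ on (0,1) with θ(t) ∈ {θ_α, −θ_α} for a.e. t ∈ (0,1) and jump set contained in S, such that θ_{n_k} → θ in L¹(K) for every compact set K ⊂ (0,1) ∖ S. -/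
/-!
The cell energy splits as `2 (cos s - α/4)² + α cos s (1 - cos d)` with `s`, `d` the half-sum and
half-difference of two neighbouring angles (`cell_eq`). On the square `[-π/2, π/2]²` it is
nonnegative and vanishes only at the two wells `(θ_α, θ_α)` and `(-θ_α, -θ_α)` (`cell_zero`). The energy
is not rescaled, so a bound on it bounds, uniformly in `n`, the number of cells whose pair of
angles lies in a given compact set avoiding the wells (`card_bad_le`).

This is applied to the sets `δ ≤ ||x| - θ_α|` or `x y ≤ 0`, for `δ = 1/(j+1)`. For each `j` the
positions `i/n` of the bad cells form at most `M j` points of `[0,1]`. By Tychonoff, along one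
subsequence all these positions converge, and the sign of the interpolation converges at every
rational point. The limit positions for `j = 0` inside `(0,1)` form the finite set `S`: away from
them no sign change survives, so the sign converges at every point and its limit is constant on
intervals avoiding `S`. Off the countable set of all limit positions the moduli converge to `θ_α`,
so the interpolations converge almost everywhere, and dominated convergence concludes.
-/

open Real MeasureTheory Filter Topology
open scoped ENNReal

noncomputable section

/-- The energy `E_n^α` of a configuration, with `m_α = −(α²/8 + 1)` (regime `0 ≤ α ≤ 4`). -/
def En (α : ℝ) (n : ℕ) (θ : ℕ → ℝ) : ℝ :=
  ∑ i ∈ Finset.range n,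
    (Real.cos (θ i + θ (i + 1)) - α / 2 * (Real.cos (θ i) + Real.cos (θ (i + 1)))
      + α ^ 2 / 8 + 1)

/-- A configuration: `θ^i ∈ [−π/2, π/2]` for `0 ≤ i ≤ n` and `θ^n = θ^0`. -/
def IsConfig (n : ℕ) (θ : ℕ → ℝ) : Prop :=
  (∀ i ≤ n, θ i ∈ Set.Icc (-(π / 2)) (π / 2)) ∧ θ n = θ 0

/-- Piecewise-constant interpolation on `[0,1)`: equal to `θ^i` on `[i/n, (i+1)/n)`. -/
def interp (n : ℕ) (θ : ℕ → ℝ) (t : ℝ) : ℝ := θ ⌊(n : ℝ) * t⌋₊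

/-- Piecewise-constant interpolation extended `1`-periodically to `ℝ`. -/
def interpPer (n : ℕ) (θ : ℕ → ℝ) (t : ℝ) : ℝ := θ ⌊(n : ℝ) * Int.fract t⌋₊

/-! ### The energy of one cell and its wells -/

/-- The energy of one cell, as a function of the angles at its two ends. -/
def cell (α x y : ℝ) : ℝ :=
  Real.cos (x + y) - α / 2 * (Real.cos x + Real.cos y) + α ^ 2 / 8 + 1

lemma cell_eq (α x y : ℝ) : cell α x y =
    2 * (Real.cos ((x + y) / 2) - α / 4) ^ 2
      + α * Real.cos ((x + y) / 2) * (1 - Real.cos ((x - y) / 2)) := by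
  have h1 : Real.cos (x + y) = 2 * Real.cos ((x + y) / 2) ^ 2 - 1 := by
    rw [← Real.cos_two_mul]; congr 1; ring
  have h2 := Real.cos_add_cos x y
  rw [cell, h1, h2]; ring

lemma cos_half_sum_nonneg {x y : ℝ} (hx : x ∈ Set.Icc (-(π / 2)) (π / 2))
    (hy : y ∈ Set.Icc (-(π / 2)) (π / 2)) : 0 ≤ Real.cos ((x + y) / 2) :=
  Real.cos_nonneg_of_mem_Icc ⟨by linarith [hx.1, hy.1], by linarith [hx.2, hy.2]⟩

lemma cell_nonneg {α x y : ℝ} (hα : 0 ≤ α) (hx : x ∈ Set.Icc (-(π / 2)) (π / 2))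
    (hy : y ∈ Set.Icc (-(π / 2)) (π / 2)) : 0 ≤ cell α x y := by
  rw [cell_eq]
  have h1 := cos_half_sum_nonneg hx hy
  have h2 : 0 ≤ 1 - Real.cos ((x - y) / 2) := by linarith [Real.cos_le_one ((x - y) / 2)]
  positivity

/-- The only zeros of the cell energy are the two wells. -/
lemma cell_zero {α x y : ℝ} (hα : 0 ≤ α) (hx : x ∈ Set.Icc (-(π / 2)) (π / 2))
    (hy : y ∈ Set.Icc (-(π / 2)) (π / 2)) (h : cell α x y = 0) :
    x = y ∧ |x| = thetaMin α := by
  rw [cell_eq] at h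
  have h1 := cos_half_sum_nonneg hx hy
  have h2 : 0 ≤ 1 - Real.cos ((x - y) / 2) := by linarith [Real.cos_le_one ((x - y) / 2)]
  have h3 : 0 ≤ α * Real.cos ((x + y) / 2) * (1 - Real.cos ((x - y) / 2)) := by positivity
  have h4 : Real.cos ((x + y) / 2) = α / 4 := by nlinarith
  have h5 : α * Real.cos ((x + y) / 2) * (1 - Real.cos ((x - y) / 2)) = 0 := by nlinarith
  have hs : |(x + y) / 2| = thetaMin α := by
    rw [thetaMin, ← h4, ← Real.cos_abs, Real.arccos_cos (abs_nonneg _)]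
    rw [abs_le]
    constructor <;> linarith [hx.1, hx.2, hy.1, hy.2, Real.pi_pos]
  have hxy : x = y := by
    rcases hα.eq_or_lt with h0 | h0
    · -- for `α = 0` the difference term is absent, but `θ_α = π/2` is extremal in the square
      have ht : thetaMin α = π / 2 := by simp [thetaMin, ← h0]
      rw [ht] at hs
      rcases abs_eq (by positivity) |>.1 hs with h | h <;>
        linarith [hx.1, hx.2, hy.1, hy.2]
    · have hc : Real.cos ((x - y) / 2) = 1 := by
        rw [h4] at h5
        have : 0 < α * (α / 4) := by positivity
        rcases mul_eq_zero.1 h5 with h | h <;> linarith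
      have := (Real.cos_eq_one_iff_of_lt_of_lt
        (by linarith [hx.1, hx.2, hy.1, hy.2, Real.pi_pos])
        (by linarith [hx.1, hx.2, hy.1, hy.2, Real.pi_pos])).1 hc
      linarith
  refine ⟨hxy, ?_⟩
  rw [← hs, ← hxy]; congr 1; ring

lemma thetaMin_pos {α : ℝ} (hα : α < 4) : 0 < thetaMin α :=
  Real.arccos_pos.2 (by linarith)

/-! ### Counting the cells away from the wells -/

/-- The pair of angles `(x, y)` is `δ`-bad: either `x` is not `δ`-close in modulus to `θ_α`, or the
two angles do not have the same strict sign. -/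
def Bad (α δ x y : ℝ) : Prop := δ ≤ |(|x| - thetaMin α)| ∨ x * y ≤ 0

/-- Bad pairs form a compact set containing no well, so the cell energy has a positive minimum
there. -/
lemma cell_lower_bound {α δ : ℝ} (hα : α ∈ Set.Ico (0 : ℝ) 4) (hδ : 0 < δ) :
    ∃ c > 0, ∀ x ∈ Set.Icc (-(π / 2)) (π / 2), ∀ y ∈ Set.Icc (-(π / 2)) (π / 2),
      Bad α δ x y → c ≤ cell α x y := by
  set F : Set (ℝ × ℝ) := (Set.Icc (-(π / 2)) (π / 2) ×ˢ Set.Icc (-(π / 2)) (π / 2)) ∩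
    {q | δ ≤ |(|q.1| - thetaMin α)| ∨ q.1 * q.2 ≤ 0} with hF
  have hcpt : IsCompact F := by
    refine (isCompact_Icc.prod isCompact_Icc).inter_right ?_
    have h1 : IsClosed {q : ℝ × ℝ | δ ≤ |(|q.1| - thetaMin α)|} :=
      isClosed_le (by fun_prop) (by fun_prop)
    have h2 : IsClosed {q : ℝ × ℝ | q.1 * q.2 ≤ 0} := isClosed_le (by fun_prop) (by fun_prop)
    exact h1.union h2
  have hcont : Continuous fun q : ℝ × ℝ => cell α q.1 q.2 := by
    unfold cell; fun_prop
  rcases F.eq_empty_or_nonempty with he | hne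
  · refine ⟨1, one_pos, fun x hx y hy hb => ?_⟩
    have : (x, y) ∈ F := ⟨⟨hx, hy⟩, hb⟩
    simp [he] at this
  · obtain ⟨q, hq, hmin⟩ := hcpt.exists_isMinOn hne hcont.continuousOn
    refine ⟨cell α q.1 q.2, ?_, fun x hx y hy hb =>
      isMinOn_iff.1 hmin (x, y) ⟨⟨hx, hy⟩, hb⟩⟩
    refine (cell_nonneg hα.1 hq.1.1 hq.1.2).lt_of_ne' fun h0 => ?_
    obtain ⟨h1, h2⟩ := cell_zero hα.1 hq.1.1 hq.1.2 h0
    have hp := thetaMin_pos hα.2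
    rcases hq.2 with h | h
    · rw [h2] at h; simp at h; linarith
    · rw [← h1, ← abs_mul_abs_self, h2] at h
      nlinarith

open Classical in
lemma card_bad_le {α δ C : ℝ} (hα : α ∈ Set.Ico (0 : ℝ) 4) (hδ : 0 < δ)
    (θseq : (n : ℕ) → ℕ → ℝ) (hconf : ∀ n, IsConfig n (θseq n))
    (hbd : ∀ n, En α n (θseq n) ≤ C) :
    ∃ M : ℕ, ∀ n,
      ((Finset.range n).filter fun i => Bad α δ (θseq n i) (θseq n (i + 1))).card ≤ M := by
  obtain ⟨c, hc, hlow⟩ := cell_lower_bound hα hδ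
  refine ⟨⌈C / c⌉₊, fun n => ?_⟩
  set A := (Finset.range n).filter fun i => Bad α δ (θseq n i) (θseq n (i + 1)) with hA
  have hmem : ∀ i ∈ Finset.range n, θseq n i ∈ Set.Icc (-(π / 2)) (π / 2) ∧
      θseq n (i + 1) ∈ Set.Icc (-(π / 2)) (π / 2) := fun i hi => by
    have := Finset.mem_range.1 hi
    exact ⟨(hconf n).1 i (by omega), (hconf n).1 (i + 1) (by omega)⟩
  have h1 : (A.card : ℝ) * c ≤ ∑ i ∈ A, cell α (θseq n i) (θseq n (i + 1)) := by
    rw [← nsmul_eq_mul]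
    refine Finset.card_nsmul_le_sum _ _ _ fun i hi => ?_
    obtain ⟨hi, hb⟩ := Finset.mem_filter.1 hi
    exact hlow _ (hmem i hi).1 _ (hmem i hi).2 hb
  have h2 : ∑ i ∈ A, cell α (θseq n i) (θseq n (i + 1)) ≤ En α n (θseq n) :=
    Finset.sum_le_sum_of_subset_of_nonneg (Finset.filter_subset _ _)
      fun i hi _ => cell_nonneg hα.1 (hmem i hi).1 (hmem i hi).2
  have h3 : (A.card : ℝ) ≤ C / c := by
    rw [le_div_iff₀ hc]; linarith [hbd n]
  exact_mod_cast h3.trans (Nat.le_ceil _)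

/-- At most `M` bad cells: their positions are among the values of a map `Fin M → [0,1]`, hence a
point of a compact space that does not depend on `n`. -/
lemma exists_positions {α δ C : ℝ} (hα : α ∈ Set.Ico (0 : ℝ) 4) (hδ : 0 < δ)
    (θseq : (n : ℕ) → ℕ → ℝ) (hconf : ∀ n, IsConfig n (θseq n))
    (hbd : ∀ n, En α n (θseq n) ≤ C) :
    ∃ M : ℕ, ∀ n, ∃ p : Fin M → unitInterval, ∀ i < n,
      Bad α δ (θseq n i) (θseq n (i + 1)) → ∃ m, (p m : ℝ) = (i : ℝ) / n := by
  classical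
  obtain ⟨M, hM⟩ := card_bad_le hα hδ θseq hconf hbd
  refine ⟨M, fun n => ?_⟩
  set A := (Finset.range n).filter fun i => Bad α δ (θseq n i) (θseq n (i + 1)) with hA
  have hle : ∀ m : ℕ, A.toList.getD m 0 ≤ n := fun m => by
    by_cases hm : m < A.toList.length
    · rw [List.getD_eq_getElem _ _ hm]
      have : A.toList[m] ∈ A := Finset.mem_toList.1 (List.getElem_mem hm)
      exact (Finset.mem_range.1 (Finset.mem_filter.1 this).1).le
    · rw [List.getD_eq_default _ _ (not_lt.1 hm)]; exact Nat.zero_le _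
  refine ⟨fun m => ⟨(A.toList.getD m 0 : ℕ) / n, by positivity,
    div_le_one_of_le₀ (by exact_mod_cast hle m) (by positivity)⟩, fun i hi hb => ?_⟩
  have hiA : i ∈ A.toList := Finset.mem_toList.2 (Finset.mem_filter.2 ⟨Finset.mem_range.2 hi, hb⟩)
  obtain ⟨m, hm, hmi⟩ := List.getElem_of_mem hiA
  have hmM : m < M := hm.trans_le (by rw [Finset.length_toList]; exact hM n)
  refine ⟨⟨m, hmM⟩, ?_⟩
  simp only [List.getD_eq_getElem _ _ hm, hmi]

/-! ### Signs and positions along a configuration -/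

/-- The positivity of the angle is unchanged between two cells with no bad cell in between. -/
lemma pos_iff_of_no_bad {α δ : ℝ} (θ : ℕ → ℝ) {a b : ℕ} (hab : a ≤ b)
    (h : ∀ i, a ≤ i → i < b → ¬ Bad α δ (θ i) (θ (i + 1))) : 0 < θ a ↔ 0 < θ b := by
  induction b, hab using Nat.le_induction with
  | base => rfl
  | succ b hab ih =>
    rw [ih fun i h1 h2 => h i h1 (by omega)]
    have hb : 0 < θ b * θ (b + 1) := by
      have := h b hab (by omega)
      simp only [Bad, not_or, not_le] at this
      exact this.2
    exact ⟨fun h0 => pos_of_mul_pos_right hb h0.le,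
      fun h0 => pos_of_mul_pos_left hb h0.le⟩

lemma tendsto_floor_div {φ : ℕ → ℕ} (hφ : StrictMono φ) {t : ℝ} (ht : 0 ≤ t) :
    Tendsto (fun k => ((⌊(φ k : ℝ) * t⌋₊ : ℕ) : ℝ) / φ k) atTop (𝓝 t) := by
  have := (tendsto_nat_floor_mul_div_atTop ht).comp
    (tendsto_natCast_atTop_atTop.comp hφ.tendsto_atTop)
  refine this.congr fun k => ?_
  simp [mul_comm]

lemma floor_lt {n : ℕ} (hn : 0 < n) {t : ℝ} (ht : t ∈ Set.Ioo (0 : ℝ) 1) : ⌊(n : ℝ) * t⌋₊ < n := by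
  have : (0 : ℝ) < n := by exact_mod_cast hn
  rw [Nat.floor_lt (by nlinarith [ht.1])]
  nlinarith [ht.2]

/-! ### Extraction of the subsequence and identification of the limit -/

/-- compactness, helimagnetic regime: for `α ∈ [0,4)` and a sequence of
configurations with equibounded energies, there exist a finite set `S ⊂ (0,1)`, a
subsequence, and a piecewise constant function `θ` with values in `{±θ_α}` and jump set
contained in `S`, such that the interpolations converge to `θ` in `L¹(K)` for every
compact `K ⊂ (0,1) ∖ S`. -/
theorem compactness_helimagnetic (α : ℝ) (hα : α ∈ Set.Ico (0 : ℝ) 4)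
    (θseq : (n : ℕ) → ℕ → ℝ) (hconf : ∀ n, IsConfig n (θseq n))
    (hbd : ∃ C : ℝ, ∀ n, En α n (θseq n) ≤ C) :
    ∃ (S : Set ℝ) (φ : ℕ → ℕ) (θL : ℝ → ℝ),
      S.Finite ∧ S ⊆ Set.Ioo 0 1 ∧ StrictMono φ ∧
      (∀ t ∈ Set.Ioo (0 : ℝ) 1, θL t ∈ ({thetaMin α, -thetaMin α} : Set ℝ)) ∧
      (∀ s ∈ Set.Ioo (0 : ℝ) 1, ∀ t ∈ Set.Ioo (0 : ℝ) 1,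
        Set.uIcc s t ∩ S = ∅ → θL s = θL t) ∧
      (∀ K : Set ℝ, IsCompact K → K ⊆ Set.Ioo 0 1 \ S →
        Filter.Tendsto (fun k => ∫ t in K, |interp (φ k) (θseq (φ k)) t - θL t|)
          Filter.atTop (𝓝 0)) := by
  classical
  obtain ⟨C, hC⟩ := hbd
  have hδ : ∀ j : ℕ, (0 : ℝ) < 1 / ((j : ℝ) + 1) := fun j => by positivity
  choose M p hp using fun j : ℕ => exists_positions hα (hδ j) θseq hconf hC
  -- the position of the bad cells at every scale, and the sign at every rational point
  let X : ℕ → (∀ j, Fin (M j) → unitInterval) × (ℚ → Bool) :=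
    fun n => (fun j => p j n, fun q => decide (0 < interp n (θseq n) q))
  obtain ⟨L, φ, hφ, hL⟩ := CompactSpace.tendsto_subseq X
  have hφpos : ∀ᶠ k in atTop, 0 < φ k := hφ.tendsto_atTop.eventually_gt_atTop 0
  have hpos : ∀ j m, Tendsto (fun k => (p j (φ k) m : ℝ)) atTop (𝓝 (L.1 j m)) := fun j m => by
    have h1 := (continuous_fst.tendsto L).comp hL
    have h2 := (tendsto_pi_nhds.1 ((tendsto_pi_nhds.1 h1) j)) m
    exact (continuous_subtype_val.tendsto _).comp h2
  have hsgn : ∀ q : ℚ, ∀ᶠ k in atTop, decide (0 < interp (φ k) (θseq (φ k)) q) = L.2 q :=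
    fun q => by
      have h1 := (continuous_snd.tendsto L).comp hL
      have h2 := (tendsto_pi_nhds.1 h1) q
      rw [nhds_discrete, tendsto_pure] at h2
      exact h2
  set S : Set ℝ := Set.range (fun m => (L.1 0 m : ℝ)) ∩ Set.Ioo 0 1 with hS
  have hSfin : S.Finite := (Set.finite_range _).inter_of_left _
  have hconst : ∀ s ∈ Set.Ioo (0 : ℝ) 1, ∀ t ∈ Set.Ioo (0 : ℝ) 1, s ≤ t → Set.Icc s t ∩ S = ∅ →
      ∀ᶠ k in atTop, (0 < interp (φ k) (θseq (φ k)) s ↔ 0 < interp (φ k) (θseq (φ k)) t) := by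
    intro s hs t ht hst hdis
    have hout : ∀ m, ∀ᶠ k in atTop,
        (p 0 (φ k) m : ℝ) < ((⌊(φ k : ℝ) * s⌋₊ : ℕ) : ℝ) / φ k ∨ t < (p 0 (φ k) m : ℝ) := by
      intro m
      by_cases h1 : (L.1 0 m : ℝ) < s
      · filter_upwards [(hpos 0 m).eventually_lt (tendsto_floor_div hφ hs.1.le) h1] with k hk
        exact Or.inl hk
      · by_cases h2 : t < (L.1 0 m : ℝ)
        · filter_upwards [(hpos 0 m).eventually_const_lt h2] with k hk
          exact Or.inr hk
        · push Not at h1 h2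
          have : (L.1 0 m : ℝ) ∈ Set.Icc s t ∩ S :=
            ⟨⟨h1, h2⟩, ⟨m, rfl⟩, hs.1.trans_le h1, h2.trans_lt ht.2⟩
          simp [hdis] at this
    filter_upwards [eventually_all.2 hout, hφpos] with k hk hk0
    have hn : (0 : ℝ) < φ k := by exact_mod_cast hk0
    refine pos_iff_of_no_bad (α := α) (δ := 1 / (((0 : ℕ) : ℝ) + 1)) (θseq (φ k))
      (Nat.floor_mono (by gcongr)) fun i h1 h2 hb => ?_
    obtain ⟨m, hm⟩ := hp 0 (φ k) i (h2.trans (floor_lt hk0 ht)) hb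
    rcases hk m with h | h
    · rw [hm] at h
      have : (i : ℝ) < (⌊(φ k : ℝ) * s⌋₊ : ℕ) := (div_lt_div_iff_of_pos_right hn).1 h
      exact absurd (by exact_mod_cast this) (not_lt.2 h1)
    · rw [hm, lt_div_iff₀ hn] at h
      have h3 : (i : ℝ) < (⌊(φ k : ℝ) * t⌋₊ : ℕ) := by exact_mod_cast h2
      have h4 := Nat.floor_le (mul_nonneg hn.le ht.1.le)
      linarith
  have hlim : ∀ t ∈ Set.Ioo (0 : ℝ) 1, t ∉ S →
      (∀ᶠ k in atTop, 0 < interp (φ k) (θseq (φ k)) t) ∨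
      (∀ᶠ k in atTop, ¬ 0 < interp (φ k) (θseq (φ k)) t) := by
    intro t ht htS
    -- a rational `q < t` so close to `t` that `[q, t]` avoids `S`
    obtain ⟨a, b, ⟨ha, hb⟩, hab⟩ := mem_nhds_iff_exists_Ioo_subset.1
      (Filter.inter_mem (hSfin.isClosed.isOpen_compl.mem_nhds htS) (isOpen_Ioo.mem_nhds ht))
    obtain ⟨q, hq1, hq2⟩ := exists_rat_btwn ha
    have hdis : Set.Icc (q : ℝ) t ∩ S = ∅ := by
      ext x
      simp only [Set.mem_inter_iff, Set.mem_empty_iff_false, iff_false, not_and]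
      exact fun hx => (hab ⟨hq1.trans_le hx.1, hx.2.trans_lt hb⟩).1
    have hev := hconst q (hab ⟨hq1, hq2.trans hb⟩).2 t ht hq2.le hdis
    cases hLq : L.2 q
    · right
      filter_upwards [hev, hsgn q] with k h1 h2
      rw [hLq, decide_eq_false_iff_not] at h2
      rwa [← h1]
    · left
      filter_upwards [hev, hsgn q] with k h1 h2
      rw [hLq, decide_eq_true_iff] at h2
      rwa [← h1]
  set θL : ℝ → ℝ := fun t =>
    if ∀ᶠ k in atTop, 0 < interp (φ k) (θseq (φ k)) t then thetaMin α else -thetaMin α with hθL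
  have hcongr : ∀ s t, (∀ᶠ k in atTop, (0 < interp (φ k) (θseq (φ k)) s ↔
      0 < interp (φ k) (θseq (φ k)) t)) → θL s = θL t := fun s t h => by
    simp only [hθL, eventually_congr h]
  -- pointwise convergence off the countable set of all limit positions
  have hconv : ∀ t ∈ Set.Ioo (0 : ℝ) 1, t ∉ ⋃ j, Set.range (fun m => (L.1 j m : ℝ)) →
      Tendsto (fun k => interp (φ k) (θseq (φ k)) t) atTop (𝓝 (θL t)) := by
    intro t ht htn
    rw [Set.mem_iUnion] at htn
    push Not at htn
    have habs : Tendsto (fun k => |interp (φ k) (θseq (φ k)) t|) atTop (𝓝 (thetaMin α)) := by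
      rw [Metric.tendsto_atTop']
      intro ε hε
      obtain ⟨j, hj⟩ := exists_nat_one_div_lt hε
      have hne : ∀ m, ∀ᶠ k in atTop,
          (p j (φ k) m : ℝ) - ((⌊(φ k : ℝ) * t⌋₊ : ℕ) : ℝ) / φ k ≠ 0 := fun m => by
        refine ((hpos j m).sub (tendsto_floor_div hφ ht.1.le)).eventually_ne ?_
        exact fun h => htn j ⟨m, sub_eq_zero.1 h⟩
      obtain ⟨N, hN⟩ := eventually_atTop.1 ((eventually_all.2 hne).and hφpos)
      refine ⟨N, fun k hk => ?_⟩
      obtain ⟨h1, h2⟩ := hN k hk.le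
      have hnb : ¬ Bad α (1 / ((j : ℝ) + 1)) (θseq (φ k) ⌊(φ k : ℝ) * t⌋₊)
          (θseq (φ k) (⌊(φ k : ℝ) * t⌋₊ + 1)) := fun hb => by
        obtain ⟨m, hm⟩ := hp j (φ k) _ (floor_lt h2 ht) hb
        exact h1 m (sub_eq_zero.2 hm)
      simp only [Bad, not_or, not_le] at hnb
      rw [Real.dist_eq]
      exact hnb.1.trans hj
    rcases hlim t ht (fun h => htn 0 h.1) with h | h
    · have : θL t = thetaMin α := if_pos h
      rw [this]
      refine habs.congr' ?_
      filter_upwards [h] with k hk using abs_of_pos hk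
    · have : θL t = -thetaMin α := if_neg fun h' => by
        obtain ⟨k, h1, h2⟩ := (h.and h').exists
        exact h1 h2
      rw [this]
      refine habs.neg.congr' ?_
      filter_upwards [h] with k hk
      rw [abs_of_nonpos (not_lt.1 hk), neg_neg]
  refine ⟨S, φ, θL, hSfin, Set.inter_subset_right, hφ, fun t _ => ?_, fun s hs t ht hdis => ?_,
    fun K hK hKS => ?_⟩
  · by_cases h : ∀ᶠ k in atTop, 0 < interp (φ k) (θseq (φ k)) t
    · exact Or.inl (if_pos h)
    · exact Or.inr (if_neg h)
  · rcases le_total s t with h | h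
    · rw [Set.uIcc_of_le h] at hdis
      exact hcongr s t (hconst s hs t ht h hdis)
    · rw [Set.uIcc_of_ge h] at hdis
      exact (hcongr t s (hconst t ht s hs h hdis)).symm
  · have hmeas : ∀ k, Measurable fun t => interp (φ k) (θseq (φ k)) t := fun k =>
      (measurable_from_nat (f := θseq (φ k))).comp
        (Nat.measurable_floor.comp (measurable_const.mul measurable_id))
    have hnull : ∀ᵐ t : ℝ ∂(volume.restrict K),
        t ∉ ⋃ j, Set.range (fun m => (L.1 j m : ℝ)) :=
      ae_restrict_of_ae ((Set.countable_iUnion fun j => Set.countable_range _).ae_notMem _)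
    have hae : ∀ᵐ t ∂(volume.restrict K),
        Tendsto (fun k => interp (φ k) (θseq (φ k)) t) atTop (𝓝 (θL t)) := by
      filter_upwards [hnull, ae_restrict_mem hK.measurableSet] with t h1 h2
      exact hconv t (hKS h2).1 h1
    have hLmeas : AEStronglyMeasurable θL (volume.restrict K) :=
      aestronglyMeasurable_of_tendsto_ae atTop (fun k => (hmeas k).aestronglyMeasurable) hae
    have hfin : IsFiniteMeasure (volume.restrict K) := ⟨by simpa using hK.measure_lt_top⟩
    have key := tendsto_integral_filter_of_dominated_convergence (μ := volume.restrict K)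
      (l := atTop) (F := fun k t => |interp (φ k) (θseq (φ k)) t - θL t|) (f := fun _ => (0 : ℝ))
      (fun _ => π / 2 + thetaMin α)
      (Eventually.of_forall fun k =>
        (continuous_abs.comp_aestronglyMeasurable ((hmeas k).aestronglyMeasurable.sub hLmeas)))
      ?_ (integrable_const _) ?_
    · simpa using key
    · filter_upwards [hφpos] with k hk
      filter_upwards [ae_restrict_mem hK.measurableSet] with t ht
      have h1 : |interp (φ k) (θseq (φ k)) t| ≤ π / 2 :=
        abs_le.2 ((hconf (φ k)).1 _ (floor_lt hk (hKS ht).1).le)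
      have h2 : |θL t| = thetaMin α := by
        have h0 := abs_of_pos (thetaMin_pos hα.2)
        simp only [hθL]
        split_ifs
        · exact h0
        · rw [abs_neg, h0]
      rw [Real.norm_eq_abs, abs_abs]
      have h3 := norm_sub_le (interp (φ k) (θseq (φ k)) t) (θL t)
      simp only [Real.norm_eq_abs] at h3
      linarith
    · filter_upwards [hae] with t ht
      have := (ht.sub_const (θL t)).abs
      simpa using this
end
end
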